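/- For any set A of positive integers, the logarithmic density of the set of multiples M(A) exists and equals the lower natural density of M(A); that is, lim_{x→∞} (1/log x)·∑_{n ≤ x, n ∈ M(A)} 1/n exists and equals liminf_{x→∞} #(M(A) ∩ [1,x])/x. -/

import Mathlib

/-!
Write `M = M(A)`, and let `M_T` be the set of multiples of the elements of `A` not exceeding `T`.
Each `M_T` is periodic on the positive integers, so it has a natural density `D T`
(`exists_density_trunc`); put `δ = sup D T`, which is at most the lower density `d` of `M`.

Lower bound: by Abel summation the lower logarithmic density of any set is at least its lower
natural density (`eventually_le_logSum`).

Upper bound: for `s > 1` consider the weights `n^{-s} / ζ(s)` on the positive integers. For a set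
closed under taking multiples, its total weight can only grow as `s` decreases to `1`
(`dirSum_mul_le`): with Jordan's totient `J_t`, one has
`n^{-σ} = ∑_{f e = n} f^{-s} · e^{-s} J_{s - σ}(e)` for `σ ≤ s`, all terms being nonnegative.
As `σ → 1` the weight of `M_T` tends to `D T`, so `M_T` has weight at most `D T` for every `s > 1`,
and, letting `T → ∞`, `M` has weight at most `δ` (`dirSum_setOfMultiples_le`). Hence the weight of
`M \ M_T` is asymptotically at most `δ - D T` as `s → 1`. Since `1 / n ≤ e · n^{-s}` for `n ≤ N` and
`s = 1 + 1 / log N`, the upper logarithmic density of `M \ M_T` is at most `e (δ - D T)`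
(`logSum_le_dirSum`), which is arbitrarily small, while `M_T` has logarithmic density `D T ≤ d`.
-/

open Filter Topology
open scoped Classical

/-- Number of elements of `S` in `[1, N]`. -/
noncomputable def countIn (S : Set ℕ) (N : ℕ) : ℕ :=
  ((Finset.Icc 1 N).filter (fun n => n ∈ S)).card

/-- The lower natural density of `S`. -/
noncomputable def lowerDensity (S : Set ℕ) : ℝ :=
  liminf (fun N : ℕ => (countIn S N : ℝ) / N) atTop

/-- The set of multiples of `A`. -/
def setOfMultiples (A : Set ℕ) : Set ℕ :=
  {n : ℕ | ∃ a ∈ A, ∃ m : ℕ, 1 ≤ m ∧ n = m * a}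

/-! ### Dirichlet series of sets -/

/-- The Dirichlet series `∑_{n ∈ S} n^{-s}` of the indicator of `S`, at a real point `s`.
For `s ≠ 0` the term `n = 0` vanishes, since `0 ^ s = 0` and `1 / 0 = 0`. -/
noncomputable def dirSum (S : Set ℕ) (s : ℝ) : ℝ :=
  ∑' n : ℕ, if n ∈ S then 1 / (n : ℝ) ^ s else 0

/-- The logarithmic partial sum `∑_{n ≤ N, n ∈ S} 1 / n`. -/
noncomputable def logSum (S : Set ℕ) (N : ℕ) : ℝ :=
  ∑ n ∈ (Finset.Icc 1 N).filter (fun n => n ∈ S), (1 : ℝ) / n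

lemma dirSum_term_nonneg (S : Set ℕ) (s : ℝ) (n : ℕ) :
    0 ≤ (if n ∈ S then 1 / (n : ℝ) ^ s else 0) := by
  split_ifs <;> positivity

lemma summable_dirSum (S : Set ℕ) {s : ℝ} (hs : 1 < s) :
    Summable (fun n : ℕ => if n ∈ S then 1 / (n : ℝ) ^ s else 0) := by
  refine Summable.of_nonneg_of_le (dirSum_term_nonneg S s) (fun n => ?_)
    (Real.summable_one_div_nat_rpow.mpr hs)
  split_ifs
  · exact le_rfl
  · positivity

lemma tendsto_dirSum_univ :
    Tendsto (fun s : ℝ => (s - 1) * dirSum Set.univ s) (𝓝[>] 1) (𝓝 1) := by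
  simpa [dirSum] using tendsto_sub_mul_tsum_nat_rpow

/-! ### Jordan's totient with a real exponent -/

/-- The real power function `n ↦ n ^ t` as an arithmetic function. -/
noncomputable def powFun (t : ℝ) : ArithmeticFunction ℝ :=
  ⟨fun n => if n = 0 then 0 else (n : ℝ) ^ t, by simp⟩

lemma powFun_apply {t : ℝ} {n : ℕ} (hn : n ≠ 0) : powFun t n = (n : ℝ) ^ t := by
  simp [powFun, hn]

lemma powFun_mult (t : ℝ) : (powFun t).IsMultiplicative := by
  rw [ArithmeticFunction.IsMultiplicative.iff_ne_zero]
  refine ⟨by simp [powFun], fun {m n} hm hn _ => ?_⟩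
  rw [powFun_apply hm, powFun_apply hn, powFun_apply (by positivity), Nat.cast_mul,
    Real.mul_rpow (by positivity) (by positivity)]

/-- Jordan's totient with a real exponent: `J_t(n) = n ^ t ∏_{p ∣ n} (1 - p ^ (-t))`. -/
noncomputable def jordan (t : ℝ) : ArithmeticFunction ℝ :=
  (powFun t).pmul (ArithmeticFunction.prodPrimeFactors (fun p => 1 - (p : ℝ) ^ (-t)))

lemma jordan_nonneg {t : ℝ} (ht : 0 ≤ t) (n : ℕ) : 0 ≤ jordan t n := by
  rcases eq_or_ne n 0 with rfl | hn
  · simp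
  rw [jordan, ArithmeticFunction.pmul_apply, ArithmeticFunction.prodPrimeFactors_apply hn,
    powFun_apply hn]
  refine mul_nonneg (by positivity) (Finset.prod_nonneg fun p hp => ?_)
  have hp1 : (1 : ℝ) ≤ p := by exact_mod_cast (Nat.prime_of_mem_primeFactors hp).one_le
  have := Real.rpow_le_one_of_one_le_of_nonpos hp1 (neg_nonpos.mpr ht)
  linarith

/-- Summing `J_t` over the divisors of `n` gives `n ^ t`. -/
lemma jordan_mul_zeta (t : ℝ) :
    jordan t * (ArithmeticFunction.zeta : ArithmeticFunction ℝ) = powFun t := by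
  have hJ : (jordan t).IsMultiplicative :=
    (powFun_mult t).pmul (ArithmeticFunction.IsMultiplicative.prodPrimeFactors _)
  rw [ArithmeticFunction.IsMultiplicative.eq_iff_eq_on_prime_powers _
    (hJ.mul ArithmeticFunction.isMultiplicative_zeta.natCast) _ (powFun_mult t)]
  intro p k hp
  rw [ArithmeticFunction.coe_mul_zeta_apply, Nat.sum_divisors_prime_pow hp]
  have hp0 : (0 : ℝ) < p := by exact_mod_cast hp.pos
  -- the sum over the divisors `p ^ i` of `p ^ k` telescopes
  induction k with
  | zero => simp [hJ.map_one, (powFun_mult t).map_one]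
  | succ k ih =>
    rw [Finset.sum_range_succ, ih, jordan, ArithmeticFunction.pmul_apply,
      ArithmeticFunction.prodPrimeFactors_apply (pow_ne_zero _ hp.ne_zero),
      Nat.primeFactors_prime_pow (Nat.succ_ne_zero k) hp, Finset.prod_singleton,
      powFun_apply (pow_ne_zero _ hp.ne_zero), powFun_apply (pow_ne_zero _ hp.ne_zero)]
    have : ((p ^ (k + 1) : ℕ) : ℝ) ^ t = ((p ^ k : ℕ) : ℝ) ^ t * (p : ℝ) ^ t := by
      push_cast
      rw [pow_succ, Real.mul_rpow (by positivity) hp0.le]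
    rw [this, Real.rpow_neg hp0.le]
    have h0 : (p : ℝ) ^ t ≠ 0 := (Real.rpow_pos_of_pos hp0 t).ne'
    field_simp
    ring

lemma sum_jordan {t : ℝ} {n : ℕ} (hn : n ≠ 0) :
    ∑ p ∈ n.divisorsAntidiagonal, jordan t p.2 = (n : ℝ) ^ t := by
  rw [← powFun_apply hn, ← jordan_mul_zeta, ArithmeticFunction.coe_mul_zeta_apply]
  exact Nat.sum_divisorsAntidiagonal' (f := fun _ e => jordan t e)

/-! ### Monotonicity in `s` for sets closed under multiples -/

/-- The product of two nonnegative series, grouped by the product of the indices. -/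
lemma tsum_mul_tsum_dirichlet (a b : ℕ → ENNReal) (ha : a 0 = 0) (hb : b 0 = 0) :
    (∑' f, a f) * (∑' e, b e) = ∑' n : ℕ, ∑ p ∈ n.divisorsAntidiagonal, a p.1 * b p.2 := by
  have h1 : (∑' f, a f) * (∑' e, b e) = ∑' p : ℕ × ℕ, a p.1 * b p.2 := by
    rw [ENNReal.tsum_prod', ← ENNReal.tsum_mul_right]
    exact tsum_congr fun f => ENNReal.tsum_mul_left.symm
  have h2 : ∀ p : ℕ × ℕ, a p.1 * b p.2 =
      ∑' n : ℕ, if n = p.1 * p.2 then a p.1 * b p.2 else 0 := by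
    intro p
    rw [tsum_ite_eq]
  rw [h1, tsum_congr h2, ENNReal.tsum_comm]
  refine tsum_congr fun n => ?_
  rw [tsum_eq_sum (s := n.divisorsAntidiagonal)]
  · refine Finset.sum_congr rfl fun p hp => ?_
    rw [if_pos (Nat.mem_divisorsAntidiagonal.mp hp).1.symm]
  · intro p hp
    split_ifs with h
    · have hn : n = 0 := by
        by_contra hn
        exact hp (Nat.mem_divisorsAntidiagonal.mpr ⟨h.symm, hn⟩)
      rcases mul_eq_zero.mp (h ▸ hn) with h | h <;> simp [h, ha, hb]
    · rfl

/-- The series `∑_{n ∈ S} n^{-s}` in `[0, ∞]`. -/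
noncomputable def eDirSum (S : Set ℕ) (s : ℝ) : ENNReal :=
  ∑' n : ℕ, ENNReal.ofReal (if n ∈ S then 1 / (n : ℝ) ^ s else 0)

lemma eDirSum_eq (S : Set ℕ) {s : ℝ} (hs : 1 < s) :
    eDirSum S s = ENNReal.ofReal (dirSum S s) :=
  (ENNReal.ofReal_tsum_of_nonneg (dirSum_term_nonneg S s) (summable_dirSum S hs)).symm

lemma jordan_term {σ s : ℝ} {n : ℕ} {p : ℕ × ℕ} (hp : p ∈ n.divisorsAntidiagonal) :
    1 / (p.1 : ℝ) ^ s * (jordan (s - σ) p.2 / (p.2 : ℝ) ^ s) =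
      jordan (s - σ) p.2 / (n : ℝ) ^ s := by
  rw [← (Nat.mem_divisorsAntidiagonal.mp hp).1, Nat.cast_mul,
    Real.mul_rpow (by positivity) (by positivity), div_mul_div_comm, one_mul]

lemma sum_jordan_div {σ s : ℝ} {n : ℕ} (hn : n ≠ 0) :
    ∑ p ∈ n.divisorsAntidiagonal, jordan (s - σ) p.2 / (n : ℝ) ^ s = 1 / (n : ℝ) ^ σ := by
  have hn' : (0 : ℝ) < n := by positivity
  rw [← Finset.sum_div, sum_jordan hn, Real.rpow_sub hn']
  have := (Real.rpow_pos_of_pos hn' s).ne'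
  field_simp

/-- For a set `S` closed under taking multiples, the proportion
`∑_{n ∈ S} n^{-s} / ζ(s)` does not increase with `s`. Indeed
`n^{-σ} = ∑_{f e = n} f^{-s} · e^{-s} J_{s - σ}(e)` with nonnegative `J_{s - σ}`, and
`f e ∈ S` whenever `f ∈ S`. -/
lemma dirSum_mul_le {S : Set ℕ} (hS : ∀ n ∈ S, ∀ m : ℕ, 1 ≤ m → n * m ∈ S) {σ s : ℝ}
    (hσ : 1 < σ) (hs : σ ≤ s) :
    dirSum S s * dirSum Set.univ σ ≤ dirSum S σ * dirSum Set.univ s := by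
  have hs1 : 1 < s := hσ.trans_le hs
  set b : ℕ → ENNReal := fun e => ENNReal.ofReal (jordan (s - σ) e / (e : ℝ) ^ s) with hb
  have hJ : ∀ e, 0 ≤ jordan (s - σ) e := jordan_nonneg (sub_nonneg.mpr hs)
  have hb0 : b 0 = 0 := by simp [hb]
  have ha0 : ∀ U : Set ℕ,
      ENNReal.ofReal (if (0 : ℕ) ∈ U then 1 / ((0 : ℕ) : ℝ) ^ s else 0) = 0 := by
    intro U
    simp [Real.zero_rpow (by linarith : s ≠ 0)]
  have huniv : eDirSum Set.univ s * ∑' e, b e = eDirSum Set.univ σ := by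
    rw [eDirSum, tsum_mul_tsum_dirichlet _ b (ha0 _) hb0, eDirSum]
    refine tsum_congr fun n => ?_
    rcases eq_or_ne n 0 with rfl | hn
    · simp [Real.zero_rpow (by linarith : σ ≠ 0)]
    rw [if_pos (Set.mem_univ n), ← sum_jordan_div (s := s) hn, ENNReal.ofReal_sum_of_nonneg
      fun p _ => div_nonneg (hJ _) (by positivity)]
    refine Finset.sum_congr rfl fun p hp => ?_
    rw [if_pos (Set.mem_univ _), hb, ← ENNReal.ofReal_mul (by positivity), jordan_term hp]
  have hSle : eDirSum S s * ∑' e, b e ≤ eDirSum S σ := by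
    rw [eDirSum, tsum_mul_tsum_dirichlet _ b (ha0 _) hb0, eDirSum]
    refine ENNReal.tsum_le_tsum fun n => ?_
    rcases eq_or_ne n 0 with rfl | hn
    · simp
    by_cases hnS : n ∈ S
    · rw [if_pos hnS, ← sum_jordan_div (s := s) hn, ENNReal.ofReal_sum_of_nonneg
        fun p _ => div_nonneg (hJ _) (by positivity)]
      refine Finset.sum_le_sum fun p hp => ?_
      rw [hb, ← ENNReal.ofReal_mul (dirSum_term_nonneg S s _), ← jordan_term hp]
      refine ENNReal.ofReal_le_ofReal (mul_le_mul_of_nonneg_right ?_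
        (div_nonneg (hJ _) (by positivity)))
      split_ifs
      · exact le_rfl
      · positivity
    · refine le_of_eq_of_le (Finset.sum_eq_zero fun p hp => ?_) zero_le
      have hp' := Nat.mem_divisorsAntidiagonal.mp hp
      have : p.1 ∉ S := fun h => hnS (hp'.1 ▸ hS _ h _ (Nat.one_le_iff_ne_zero.mpr
        (by rintro h2; rw [h2, mul_zero] at hp'; exact hn hp'.1.symm)))
      simp [this]
  have key : eDirSum S s * eDirSum Set.univ σ ≤ eDirSum S σ * eDirSum Set.univ s := by
    calc eDirSum S s * eDirSum Set.univ σ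
        = (eDirSum S s * ∑' e, b e) * eDirSum Set.univ s := by rw [← huniv]; ring
      _ ≤ _ := by gcongr
  have hnn : ∀ (U : Set ℕ) (r : ℝ), 0 ≤ dirSum U r := fun U r =>
    tsum_nonneg (dirSum_term_nonneg U r)
  rw [eDirSum_eq _ hσ, eDirSum_eq _ hσ, eDirSum_eq _ hs1, eDirSum_eq _ hs1,
    ← ENNReal.ofReal_mul (hnn _ _), ← ENNReal.ofReal_mul (hnn _ _)] at key
  exact (ENNReal.ofReal_le_ofReal_iff (mul_nonneg (hnn _ _) (hnn _ _))).mp key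

/-! ### Natural, logarithmic and Dirichlet densities -/

lemma countIn_eq_sum (S : Set ℕ) (N : ℕ) :
    (countIn S N : ℝ) = ∑ k ∈ Finset.Icc 1 N, if k ∈ S then (1 : ℝ) else 0 := by
  simp [countIn]

/-- The Abelian theorem: a natural density is also a Dirichlet density. -/
lemma tendsto_dirSum_of_density {S : Set ℕ} {l : ℝ}
    (h : Tendsto (fun N : ℕ => (countIn S N : ℝ) / N) atTop (𝓝 l)) :
    Tendsto (fun s : ℝ => (s - 1) * dirSum S s) (𝓝[>] 1) (𝓝 l) := by
  have h1 := LSeries_tendsto_sub_mul_nhds_one_of_tendsto_sum_div_and_nonneg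
    (fun k => if k ∈ S then (1 : ℝ) else 0) (l := l)
    (h.congr fun N => by rw [countIn_eq_sum]) (fun n => by split_ifs <;> norm_num)
  rw [← Filter.tendsto_ofReal_iff]
  refine h1.congr' ?_
  filter_upwards [self_mem_nhdsWithin] with s hs
  have hs0 : s ≠ 0 := by
    have : (1 : ℝ) < s := hs
    linarith
  rw [dirSum, Complex.ofReal_mul, Complex.ofReal_tsum]
  have : LSeries (fun n => (((if n ∈ S then (1 : ℝ) else 0) : ℝ) : ℂ)) s =
      ∑' n : ℕ, (((if n ∈ S then 1 / (n : ℝ) ^ s else 0) : ℝ) : ℂ) := by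
    refine tsum_congr fun n => ?_
    rcases eq_or_ne n 0 with rfl | hn
    · simp [Real.zero_rpow hs0]
    · rw [LSeries.term_of_ne_zero hn]
      split_ifs
      · rw [Complex.ofReal_div, Complex.ofReal_cpow (by positivity)]
        simp
      · simp
  simp [this]

lemma countIn_succ (S : Set ℕ) (N : ℕ) :
    (countIn S (N + 1) : ℝ) = countIn S N + if N + 1 ∈ S then 1 else 0 := by
  rw [countIn_eq_sum, countIn_eq_sum, Finset.sum_Icc_succ_top (by omega)]

lemma logSum_succ (S : Set ℕ) (N : ℕ) :
    logSum S (N + 1) = logSum S N + if N + 1 ∈ S then 1 / ((N : ℝ) + 1) else 0 := by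
  rw [logSum, logSum, Finset.sum_filter, Finset.sum_filter, Finset.sum_Icc_succ_top (by omega)]
  push_cast
  rfl

lemma countIn_le (S : Set ℕ) (N : ℕ) : countIn S N ≤ N := by
  simpa [countIn] using Finset.card_filter_le (Finset.Icc 1 N) (fun n => n ∈ S)

lemma countIn_mono {S U : Set ℕ} (h : S ⊆ U) (N : ℕ) : countIn S N ≤ countIn U N :=
  Finset.card_le_card (Finset.monotone_filter_right _ fun _ _ hx => h hx)

lemma countIn_div_le_one (S : Set ℕ) (N : ℕ) : (countIn S N : ℝ) / N ≤ 1 :=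
  div_le_one_of_le₀ (by exact_mod_cast countIn_le S N) (by positivity)

lemma countIn_div_nonneg (S : Set ℕ) (N : ℕ) : 0 ≤ (countIn S N : ℝ) / N := by positivity

/-- Abel summation in difference form: `logSum S N = countIn S N / N + ∑_{n < N} c(n) / (n (n+1))`
with `c(n) = countIn S n`. -/
lemma abel_step (S : Set ℕ) {N : ℕ} (hN : 1 ≤ N) :
    logSum S (N + 1) - countIn S (N + 1) / ((N : ℝ) + 1) =
      (logSum S N - countIn S N / N) + countIn S N / N * (1 / ((N : ℝ) + 1)) := by
  have : (0 : ℝ) < N := by exact_mod_cast hN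
  rw [logSum_succ, countIn_succ]
  split_ifs <;> field_simp <;> ring

/-- A lower bound for the counting proportions passes, with an arbitrarily small loss, to the
logarithmic means. -/
lemma eventually_le_logSum {S : Set ℕ} {κ κ' : ℝ} (hκ : 0 ≤ κ) (hκ' : κ' < κ)
    (h : ∀ᶠ N : ℕ in atTop, κ ≤ (countIn S N : ℝ) / N) :
    ∀ᶠ N : ℕ in atTop, κ' ≤ logSum S N / Real.log N := by
  obtain ⟨n₀, hn₀⟩ := eventually_atTop.mp h
  set n₁ := max n₀ 1
  set C := (logSum S n₁ - countIn S n₁ / n₁) - κ * Real.log (n₁ + 1)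
  have hmono : ∀ N, n₁ ≤ N → κ * Real.log ((N : ℝ) + 1) + C ≤
      logSum S N - countIn S N / N := by
    intro N hN
    induction N, hN using Nat.le_induction with
    | base => simp [C]
    | succ N hN ih =>
      have hN1 : 1 ≤ N := le_trans (le_max_right _ _) hN
      push_cast
      rw [abel_step S hN1]
      have h1 := hn₀ N (le_trans (le_max_left _ _) hN)
      have h2 : Real.log ((N : ℝ) + 1 + 1) - Real.log ((N : ℝ) + 1) ≤ 1 / ((N : ℝ) + 1) := by
        rw [← Real.log_div (by positivity) (by positivity)]
        refine (Real.log_le_sub_one_of_pos (by positivity)).trans_eq ?_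
        field_simp
        ring
      have h3 : κ * (1 / ((N : ℝ) + 1)) ≤ countIn S N / N * (1 / ((N : ℝ) + 1)) := by gcongr
      have h4 := mul_le_mul_of_nonneg_left h2 hκ
      linarith
  have hlog : Tendsto (fun N : ℕ => Real.log N) atTop atTop :=
    Real.tendsto_log_atTop.comp tendsto_natCast_atTop_atTop
  filter_upwards [hlog.eventually_ge_atTop (-C / (κ - κ')), hlog.eventually_gt_atTop 0,
    eventually_ge_atTop n₁] with N h1 h2 h3
  rw [le_div_iff₀ h2]
  rw [div_le_iff₀ (by linarith)] at h1
  have h4 := hmono N h3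
  have h5 : Real.log N ≤ Real.log ((N : ℝ) + 1) := by
    refine Real.log_le_log ?_ (by linarith)
    exact_mod_cast le_trans (le_max_right _ _) h3
  have h6 := mul_le_mul_of_nonneg_left h5 hκ
  have h7 := countIn_div_nonneg S N
  nlinarith

/-- An upper bound for the counting proportions passes, with an arbitrarily small loss, to the
logarithmic means. -/
lemma eventually_logSum_le {S : Set ℕ} {κ κ' : ℝ} (hκ : 0 ≤ κ) (hκ' : κ < κ')
    (h : ∀ᶠ N : ℕ in atTop, (countIn S N : ℝ) / N ≤ κ) :
    ∀ᶠ N : ℕ in atTop, logSum S N / Real.log N ≤ κ' := by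
  obtain ⟨n₀, hn₀⟩ := eventually_atTop.mp h
  set n₁ := max n₀ 1
  set C := (logSum S n₁ - countIn S n₁ / n₁) - κ * Real.log n₁
  have hmono : ∀ N, n₁ ≤ N → logSum S N - countIn S N / N ≤ κ * Real.log N + C := by
    intro N hN
    induction N, hN using Nat.le_induction with
    | base => simp [C]
    | succ N hN ih =>
      have hN1 : 1 ≤ N := le_trans (le_max_right _ _) hN
      have hN0 : (0 : ℝ) < N := by exact_mod_cast hN1
      push_cast
      rw [abel_step S hN1]
      have h1 := hn₀ N (le_trans (le_max_left _ _) hN)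
      have h2 : 1 / ((N : ℝ) + 1) ≤ Real.log ((N : ℝ) + 1) - Real.log N := by
        rw [← Real.log_div (by positivity) (by positivity)]
        refine le_of_eq_of_le ?_ (Real.one_sub_inv_le_log_of_pos (by positivity))
        field_simp
        ring
      have h3 : countIn S N / N * (1 / ((N : ℝ) + 1)) ≤ κ * (1 / ((N : ℝ) + 1)) := by gcongr
      have h4 := mul_le_mul_of_nonneg_left h2 hκ
      linarith
  have hlog : Tendsto (fun N : ℕ => Real.log N) atTop atTop :=
    Real.tendsto_log_atTop.comp tendsto_natCast_atTop_atTop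
  filter_upwards [hlog.eventually_ge_atTop ((C + 1) / (κ' - κ)), hlog.eventually_gt_atTop 0,
    eventually_ge_atTop n₁] with N h1 h2 h3
  rw [div_le_iff₀ h2]
  rw [div_le_iff₀ (by linarith)] at h1
  have h4 := hmono N h3
  have h7 := countIn_div_le_one S N
  nlinarith

/-- The crude Tauberian bound: `1 / n ≤ e · n ^ (-1 - 1 / log N)` for `n ≤ N`. -/
lemma logSum_le_dirSum (S : Set ℕ) {N : ℕ} (hN : 1 < Real.log N) :
    logSum S N ≤ Real.exp 1 * dirSum S (1 + 1 / Real.log N) := by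
  have hpos : 0 < Real.log N := by linarith
  set s := 1 + 1 / Real.log N with hs
  have hs1 : 1 < s := by
    have : 0 < 1 / Real.log N := by positivity
    linarith
  rw [logSum, Finset.sum_filter, dirSum]
  refine le_trans ?_ (mul_le_mul_of_nonneg_left ((summable_dirSum S hs1).sum_le_tsum
    (Finset.Icc 1 N) fun n _ => dirSum_term_nonneg S s n) (Real.exp_pos 1).le)
  rw [Finset.mul_sum]
  refine Finset.sum_le_sum fun n hn => ?_
  obtain ⟨hn1, hnN⟩ := Finset.mem_Icc.mp hn
  have hn0 : (0 : ℝ) < n := by exact_mod_cast hn1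
  split_ifs
  · have h1 : (n : ℝ) ^ (1 / Real.log N) ≤ Real.exp 1 := by
      rw [Real.rpow_def_of_pos hn0]
      refine Real.exp_le_exp.mpr ?_
      rw [mul_one_div]
      exact div_le_one_of_le₀ (Real.log_le_log hn0 (by exact_mod_cast hnN)) hpos.le
    rw [hs, Real.rpow_add hn0, Real.rpow_one, mul_one_div, div_le_div_iff₀ hn0 (by positivity)]
    nlinarith
  · simp

/-! ### Truncations of the set of multiples -/

/-- The multiples of the elements of `A` not exceeding `T`. -/
def truncMultiples (A : Set ℕ) (T : ℕ) : Set ℕ :=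
  setOfMultiples {a ∈ A | a ≤ T}

lemma mul_mem_setOfMultiples {A : Set ℕ} :
    ∀ n ∈ setOfMultiples A, ∀ m : ℕ, 1 ≤ m → n * m ∈ setOfMultiples A := by
  rintro n ⟨a, ha, k, hk, rfl⟩ m hm
  exact ⟨a, ha, k * m, Nat.mul_pos hk hm, by ring⟩

lemma setOfMultiples_mono {A B : Set ℕ} (h : A ⊆ B) : setOfMultiples A ⊆ setOfMultiples B := by
  rintro n ⟨a, ha, k, hk, rfl⟩
  exact ⟨a, h ha, k, hk, rfl⟩

lemma truncMultiples_subset (A : Set ℕ) (T : ℕ) : truncMultiples A T ⊆ setOfMultiples A :=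
  setOfMultiples_mono fun _ h => h.1

lemma mem_truncMultiples_self {A : Set ℕ} {n T : ℕ} (h : n ∈ setOfMultiples A) (hn : n ≤ T) :
    n ∈ truncMultiples A T := by
  obtain ⟨a, ha, k, hk, rfl⟩ := h
  exact ⟨a, ⟨ha, le_trans (Nat.le_mul_of_pos_left a hk) hn⟩, k, hk, rfl⟩

/-- A set which is periodic on the positive integers has a natural density. -/
lemma exists_density_of_periodic {S : Set ℕ} {q : ℕ} (hq : 0 < q) (p : ℕ → Prop)
    (hp : Function.Periodic p q) (hS : ∀ n, 1 ≤ n → (n ∈ S ↔ p n)) :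
    Tendsto (fun N : ℕ => (countIn S N : ℝ) / N) atTop (𝓝 ((q.count p : ℝ) / q)) := by
  have hcount : ∀ N, countIn S N = ((Finset.Ico 1 (1 + N)).filter p).card := by
    intro N
    rw [countIn]
    congr 1
    ext n
    simp only [Finset.mem_filter, Finset.mem_Icc, Finset.mem_Ico]
    constructor
    · rintro ⟨⟨h1, h2⟩, h3⟩
      exact ⟨⟨h1, by omega⟩, (hS n h1).mp h3⟩
    · rintro ⟨⟨h1, h2⟩, h3⟩
      exact ⟨⟨h1, by omega⟩, (hS n h1).mpr h3⟩
  have hper : ∀ N, countIn S (N + q) = countIn S N + q.count p := by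
    intro N
    rw [hcount, hcount, ← Nat.filter_Ico_card_eq_of_periodic (1 + N) q p hp, ← add_assoc,
      ← Finset.card_union_of_disjoint, ← Finset.filter_union,
      Finset.Ico_union_Ico_eq_Ico (by omega) (by omega)]
    exact Finset.disjoint_filter_filter (Finset.Ico_disjoint_Ico_consecutive _ _ _)
  set c := q.count p
  have hq' : (0 : ℝ) < q := by exact_mod_cast hq
  -- the discrepancy `countIn S N - (c / q) N` is `q`-periodic, hence bounded
  have hbound : ∀ N, |(countIn S N : ℝ) - c / q * N| ≤ q + c := by
    intro N
    induction N using Nat.strong_induction_on with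
    | _ N ih =>
      rcases lt_or_ge N q with h | h
      · have h1 : (countIn S N : ℝ) ≤ N := by exact_mod_cast countIn_le S N
        have h2 : (N : ℝ) ≤ q := by exact_mod_cast h.le
        have h3 : (c : ℝ) / q * N ≤ c := by
          rw [div_mul_eq_mul_div, div_le_iff₀ hq']
          gcongr
        have h4 : (0 : ℝ) ≤ c / q * N := by positivity
        have h5 : (0 : ℝ) ≤ countIn S N := by positivity
        rw [abs_le]
        constructor <;> linarith
      · obtain ⟨M, rfl⟩ := Nat.exists_eq_add_of_le' h
        have := ih M (by omega)
        rw [hper]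
        push_cast
        have e : (c : ℝ) / q * (M + q) = c / q * M + c := by field_simp
        rw [e]
        convert this using 2
        ring
  have hlim : Tendsto (fun N : ℕ => ((q : ℝ) + c) / N) atTop (𝓝 0) :=
    tendsto_const_div_atTop_nhds_zero_nat _
  rw [tendsto_iff_norm_sub_tendsto_zero]
  refine squeeze_zero' (Eventually.of_forall fun _ => norm_nonneg _) ?_ hlim
  filter_upwards [eventually_gt_atTop 0] with N hN
  have hN' : (0 : ℝ) < N := by exact_mod_cast hN
  rw [Real.norm_eq_abs, le_div_iff₀ hN', ← abs_of_pos hN', ← abs_mul, abs_of_pos hN']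
  refine le_of_eq_of_le ?_ (hbound N)
  congr 1
  field_simp

lemma exists_density_trunc {A : Set ℕ} (hA : ∀ a ∈ A, 0 < a) (T : ℕ) :
    ∃ δ : ℝ, Tendsto (fun N : ℕ => (countIn (truncMultiples A T) N : ℝ) / N) atTop (𝓝 δ) := by
  refine ⟨_, exists_density_of_periodic (q := T.factorial) T.factorial_pos
    (fun n => ∃ a ∈ A, a ≤ T ∧ a ∣ n) (fun n => ?_) fun n hn => ?_⟩
  · refine propext (exists_congr fun a => and_congr_right fun ha => and_congr_right fun hT => ?_)
    exact (Nat.dvd_add_iff_left (Nat.dvd_factorial (hA a ha) hT)).symm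
  · constructor
    · rintro ⟨a, ⟨ha, hT⟩, k, -, rfl⟩
      exact ⟨a, ha, hT, dvd_mul_left _ _⟩
    · rintro ⟨a, ha, hT, k, rfl⟩
      exact ⟨a, ⟨ha, hT⟩, k, Nat.pos_of_mul_pos_left hn, by ring⟩

lemma dirSum_diff {S U : Set ℕ} (h : S ⊆ U) {s : ℝ} (hs : 1 < s) :
    dirSum (U \ S) s = dirSum U s - dirSum S s := by
  rw [dirSum, dirSum, dirSum, ← (summable_dirSum U hs).tsum_sub (summable_dirSum S hs)]
  refine tsum_congr fun n => ?_
  by_cases h1 : n ∈ S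
  · simp [h1, h h1]
  · simp [h1]

lemma logSum_diff {S U : Set ℕ} (h : S ⊆ U) (N : ℕ) :
    logSum (U \ S) N = logSum U N - logSum S N := by
  rw [logSum, logSum, logSum, Finset.sum_filter, Finset.sum_filter, Finset.sum_filter,
    ← Finset.sum_sub_distrib]
  refine Finset.sum_congr rfl fun n _ => ?_
  by_cases h1 : n ∈ S
  · simp [h1, h h1]
  · simp [h1]

/-- If `S` is closed under multiples and has natural density `δ`, then its proportion under the
weights `n^{-s} / ζ(s)` is at most `δ` for every `s > 1`. -/
lemma dirSum_le_density {S : Set ℕ} (hS : ∀ n ∈ S, ∀ m : ℕ, 1 ≤ m → n * m ∈ S) {δ : ℝ}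
    (hδ : Tendsto (fun N : ℕ => (countIn S N : ℝ) / N) atTop (𝓝 δ)) {s : ℝ} (hs : 1 < s) :
    dirSum S s ≤ δ * dirSum Set.univ s := by
  have h1 : Tendsto (fun σ : ℝ => dirSum S s * ((σ - 1) * dirSum Set.univ σ)) (𝓝[>] 1)
      (𝓝 (dirSum S s * 1)) := tendsto_dirSum_univ.const_mul _
  have h2 : Tendsto (fun σ : ℝ => ((σ - 1) * dirSum S σ) * dirSum Set.univ s) (𝓝[>] 1)
      (𝓝 (δ * dirSum Set.univ s)) := (tendsto_dirSum_of_density hδ).mul_const _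
  rw [mul_one] at h1
  refine le_of_tendsto_of_tendsto h1 h2 ?_
  filter_upwards [Ioo_mem_nhdsGT hs] with σ hσ
  have := mul_le_mul_of_nonneg_left (dirSum_mul_le hS hσ.1 hσ.2.le) (sub_nonneg.mpr hσ.1.le)
  linarith

/-- If every truncation has density at most `δ`, the same bound holds for the proportion of the
full set of multiples under the weights `n^{-s} / ζ(s)`. -/
lemma dirSum_setOfMultiples_le {A : Set ℕ} {δ : ℝ} {D : ℕ → ℝ}
    (hD : ∀ T, Tendsto (fun N : ℕ => (countIn (truncMultiples A T) N : ℝ) / N) atTop (𝓝 (D T)))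
    (hδ : ∀ T, D T ≤ δ) {s : ℝ} (hs : 1 < s) :
    dirSum (setOfMultiples A) s ≤ δ * dirSum Set.univ s := by
  refine Real.tsum_le_of_sum_range_le (dirSum_term_nonneg _ s) fun T => ?_
  calc ∑ n ∈ Finset.range T, (if n ∈ setOfMultiples A then 1 / (n : ℝ) ^ s else 0)
      ≤ ∑ n ∈ Finset.range T, (if n ∈ truncMultiples A T then 1 / (n : ℝ) ^ s else 0) := by
        refine Finset.sum_le_sum fun n hn => ?_
        by_cases h : n ∈ setOfMultiples A
        · rw [if_pos h, if_pos (mem_truncMultiples_self h (Finset.mem_range.mp hn).le)]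
        · rw [if_neg h]
          exact dirSum_term_nonneg _ s n
    _ ≤ dirSum (truncMultiples A T) s :=
        (summable_dirSum _ hs).sum_le_tsum _ fun n _ => dirSum_term_nonneg _ s n
    _ ≤ D T * dirSum Set.univ s := dirSum_le_density mul_mem_setOfMultiples (hD T) hs
    _ ≤ δ * dirSum Set.univ s :=
        mul_le_mul_of_nonneg_right (hδ T) (tsum_nonneg (dirSum_term_nonneg _ s))

/-! ### The Davenport–Erdős theorem -/

lemma isBounded_ge_countIn (S : Set ℕ) :
    IsBoundedUnder (· ≥ ·) atTop (fun N : ℕ => (countIn S N : ℝ) / N) :=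
  isBoundedUnder_of ⟨0, countIn_div_nonneg S⟩

lemma isCobounded_ge_countIn (S : Set ℕ) :
    IsCoboundedUnder (· ≥ ·) atTop (fun N : ℕ => (countIn S N : ℝ) / N) :=
  (isBoundedUnder_of ⟨1, countIn_div_le_one S⟩ : IsBoundedUnder (· ≤ ·) atTop _).isCoboundedUnder_ge

theorem davenport_erdos (A : Set ℕ) (hA : ∀ a ∈ A, 0 < a) :
    Tendsto (fun N : ℕ =>
        (∑ n ∈ (Finset.Icc 1 N).filter (fun n => n ∈ setOfMultiples A), (1 : ℝ) / n) /
          Real.log N)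
      atTop (nhds (lowerDensity (setOfMultiples A))) := by
  change Tendsto (fun N : ℕ => logSum (setOfMultiples A) N / Real.log N) atTop _
  set M := setOfMultiples A with hM
  set d := lowerDensity M with hd
  choose D hD using exists_density_trunc hA
  have hDd : ∀ T, D T ≤ d := by
    intro T
    rw [← (hD T).liminf_eq]
    refine liminf_le_liminf (Eventually.of_forall fun N => ?_)
      (isBounded_ge_countIn _) (isCobounded_ge_countIn _)
    have := countIn_mono (truncMultiples_subset A T) N
    gcongr
  have hD0 : ∀ T, 0 ≤ D T := fun T =>
    ge_of_tendsto' (hD T) fun N => countIn_div_nonneg _ N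
  have hbdd : BddAbove (Set.range D) := ⟨d, by rintro _ ⟨T, rfl⟩; exact hDd T⟩
  set δ := ⨆ T, D T with hδ
  have hDδ : ∀ T, D T ≤ δ := fun T => le_ciSup hbdd T
  have hδd : δ ≤ d := ciSup_le hDd
  have hd0 : 0 ≤ d := (hD0 0).trans (hDd 0)
  have hlog : Tendsto (fun N : ℕ => Real.log N) atTop atTop :=
    Real.tendsto_log_atTop.comp tendsto_natCast_atTop_atTop
  -- the exponents `1 + 1 / log N` used in the Tauberian bound
  have hs : Tendsto (fun N : ℕ => 1 + 1 / Real.log N) atTop (𝓝[>] 1) := by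
    refine tendsto_nhdsWithin_iff.mpr ⟨?_, ?_⟩
    · simpa using (tendsto_inv_atTop_zero.comp hlog).const_add 1
    · filter_upwards [hlog.eventually_gt_atTop 0] with N hN
      have : 0 < 1 / Real.log N := by positivity
      simpa using hN
  refine tendsto_order.mpr ⟨fun x hx => ?_, fun x hx => ?_⟩
  · rcases lt_or_ge x 0 with hx0 | hx0
    · filter_upwards with N
      refine lt_of_lt_of_le hx0 (div_nonneg (Finset.sum_nonneg fun _ _ => by positivity)
        (Real.log_natCast_nonneg N))
    · obtain ⟨y, hxy, hyd⟩ := exists_between hx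
      obtain ⟨z, hyz, hzd⟩ := exists_between hyd
      have h1 : ∀ᶠ N : ℕ in atTop, z < (countIn M N : ℝ) / N :=
        eventually_lt_of_lt_liminf hzd (isBounded_ge_countIn M)
      filter_upwards [eventually_le_logSum (by linarith) hyz (h1.mono fun _ h => h.le)] with N hN
      linarith
  -- split `M` into a truncation, of log density `D T`, and a remainder of small log density
  · set ε := (x - d) / 20 with hε
    have hεpos : 0 < ε := by
      rw [hε]
      linarith
    obtain ⟨T, hT⟩ := exists_lt_of_lt_ciSup (show δ - ε < ⨆ T, D T by linarith)
    set R := M \ truncMultiples A T with hR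
    have h1 : ∀ᶠ N : ℕ in atTop, logSum (truncMultiples A T) N / Real.log N ≤ d + 2 * ε := by
      refine eventually_logSum_le (κ := d + ε) (by linarith) (by linarith) ?_
      filter_upwards [(hD T).eventually_lt_const (show D T < d + ε by linarith [hDd T])]
        with N hN using hN.le
    have h2 : Tendsto (fun s : ℝ => δ * ((s - 1) * dirSum Set.univ s) -
        (s - 1) * dirSum (truncMultiples A T) s) (𝓝[>] 1) (𝓝 (δ * 1 - D T)) :=
      (tendsto_dirSum_univ.const_mul δ).sub (tendsto_dirSum_of_density (hD T))
    have h3 : ∀ᶠ N : ℕ in atTop, logSum R N / Real.log N ≤ 3 * ε := by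
      filter_upwards [(h2.comp hs).eventually_lt_const (show δ * 1 - D T < ε by linarith),
        hlog.eventually_gt_atTop 1] with N hN hN1
      have hpos : 0 < Real.log N := by linarith
      have hs1 : 1 < 1 + 1 / Real.log N := by
        have : 0 < 1 / Real.log N := by positivity
        linarith
      have h4 := logSum_le_dirSum R hN1
      rw [hR, dirSum_diff (truncMultiples_subset A T) hs1, ← hR] at h4
      have h5 := dirSum_setOfMultiples_le hD hDδ hs1
      simp only [Function.comp_apply, add_sub_cancel_left] at hN
      have h6 : δ * dirSum Set.univ (1 + 1 / Real.log N) -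
          dirSum (truncMultiples A T) (1 + 1 / Real.log N) < ε * Real.log N := by
        have := mul_lt_mul_of_pos_right hN hpos
        refine lt_of_eq_of_lt ?_ this
        field_simp
      have he : Real.exp 1 < 3 := by linarith [Real.exp_one_lt_d9]
      rw [div_le_iff₀ hpos]
      calc logSum R N ≤ _ := h4
        _ ≤ Real.exp 1 * (ε * Real.log N) := by
            refine mul_le_mul_of_nonneg_left ?_ (Real.exp_pos 1).le
            linarith
        _ ≤ 3 * (ε * Real.log N) := by gcongr
        _ = 3 * ε * Real.log N := by ring
    filter_upwards [h1, h3] with N h1 h3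
    rw [hR, logSum_diff (truncMultiples_subset A T), sub_div] at h3
    linarith
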